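/- arXiv:2304.02334 — 2 statements merged into one kernel-verified Lean document; each statement's English description precedes it below -/
import Mathlib

section
/- Let c ∈ [0, √2) and let u : ℝ → ℂ be a nonconstant bounded smooth function with u' ∈ L²(ℝ) and 1 − |u|² ∈ L²(ℝ) satisfying i·c·u'(x) + u''(x) + (1 − |u(x)|²)·u(x) = 0 for all x ∈ ℝ. Then there exist α ∈ ℝ and a ∈ ℝ such that u(x) = e^{iα}·u_c(x − a) for all x ∈ ℝ, where u_c(x) = √((2 − c²)/2)·tanh(√(2 − c²)·x/2) − i·c/√2. -/
open MeasureTheory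

/-!
Write `η = 1 - |u|²` and `v = u'`. The energy `|v|² - η²/2` and the momentum `Im (ū v) - c η / 2`
are constant along a solution. Finite energy forces `v` and `η` to be simultaneously arbitrarily
small, so both constants vanish: `|v|² = η²/2` and `Im (ū v) = c η / 2`. By Grönwall, a zero of `η`
would make `η` and hence `v` vanish identically, so `η` has no zero for nonconstant `u`. The two
conservation laws then say exactly that `v / η` is constant, so `u` moves along a straight line in
`ℂ`, which after a rotation is `Im = -c / √2`. The position `f` on this line solves the Riccati
equation `f' = (1 - c²/2 - f²) / √2`, whose only global solutions without equilibria are `tanh`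
profiles; for `c² ≥ 2` there are none.
-/

open Filter Topology
open scoped ComplexConjugate

theorem eq_of_forall_hasDerivAt_zero {E : Type*} [NormedAddCommGroup E] [NormedSpace ℝ E]
    {f : ℝ → E} (hf : ∀ x, HasDerivAt f 0 x) (x y : ℝ) : f x = f y :=
  is_const_of_deriv_eq_zero (fun z ↦ (hf z).differentiableAt) (fun z ↦ (hf z).deriv) x y

section Gronwall

variable {E : Type*} [NormedAddCommGroup E] [NormedSpace ℝ E] {f f' : ℝ → E} {k : ℝ → ℝ}
  {x₀ x : ℝ}

theorem eq_zero_of_norm_deriv_le_mul_of_le (hf : ∀ x, HasDerivAt f (f' x) x) (hk : Continuous k)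
    (hbound : ∀ x, ‖f' x‖ ≤ k x * ‖f x‖) (h₀ : f x₀ = 0) (hx : x₀ ≤ x) : f x = 0 := by
  obtain ⟨K, hK⟩ := isCompact_Icc.exists_bound_of_continuousOn (hk.continuousOn (s := .Icc x₀ x))
  refine eq_zero_of_abs_deriv_le_mul_abs_self_of_eq_zero_right (K := K)
    (fun y _ ↦ (hf y).continuousAt.continuousWithinAt) (fun y _ ↦ (hf y).hasDerivWithinAt) h₀
    (fun y hy ↦ (hbound y).trans ?_) x ⟨hx, le_rfl⟩
  gcongr
  exact (le_abs_self _).trans (hK y (Set.Ico_subset_Icc_self hy))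

theorem eq_zero_of_norm_deriv_le_mul (hf : ∀ x, HasDerivAt f (f' x) x) (hk : Continuous k)
    (hbound : ∀ x, ‖f' x‖ ≤ k x * ‖f x‖) (h₀ : f x₀ = 0) (x : ℝ) : f x = 0 := by
  rcases le_total x₀ x with hx | hx
  · exact eq_zero_of_norm_deriv_le_mul_of_le hf hk hbound h₀ hx
  · have hreflect : ∀ y, HasDerivAt (fun y ↦ f (-y)) (-f' (-y)) y := fun y ↦ by
      simpa [Function.comp_def] using (hf (-y)).scomp y (hasDerivAt_neg y)
    simpa using eq_zero_of_norm_deriv_le_mul_of_le hreflect (hk.comp continuous_neg)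
      (fun y ↦ by simpa using hbound (-y)) (x₀ := -x₀) (by simpa using h₀) (neg_le_neg hx)

end Gronwall

section MemLp

variable {α E F : Type*} [MeasurableSpace α] {μ : Measure α} [NormedAddCommGroup E]
  [NormedAddCommGroup F] {f : α → E} {g : α → F} {p : ENNReal}

theorem memLp_prodMk (hf : MemLp f p μ) (hg : MemLp g p μ) : MemLp (fun x ↦ (f x, g x)) p μ :=
  (hf.norm.add hg.norm).mono (hf.1.prodMk hg.1) <| .of_forall fun x ↦ by
    simp [abs_of_nonneg, add_nonneg]

theorem comap_nhds_zero_neBot_of_memLp (hf : MemLp f p μ) (hp₀ : p ≠ 0) (hp : p ≠ ⊤)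
    (hμ : μ Set.univ = ⊤) : (comap f (𝓝 0)).NeBot := by
  rw [comap_neBot_iff_frequently, ← mem_closure_iff_frequently, Metric.mem_closure_range_iff]
  by_contra! ⟨ε, hε, hfar⟩
  have hconst : MemLp (fun _ : α ↦ ε) p μ :=
    hf.of_le aestronglyMeasurable_const <| .of_forall fun x ↦ by
      simpa [abs_of_pos hε] using hfar x
  rcases (memLp_const_iff hp₀ hp).1 hconst with h | h
  · exact hε.ne' h
  · exact h.ne hμ

end MemLp

theorem tanh_eq_one_sub_exp_div_one_add_exp (y : ℝ) :
    Real.tanh y = (1 - Real.exp (-2 * y)) / (1 + Real.exp (-2 * y)) := by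
  have hexp : Real.exp (-2 * y) = Real.exp (-y) * Real.exp (-y) := by
    rw [← Real.exp_add]; ring_nf
  rw [Real.tanh_eq, hexp, Real.exp_neg]
  have := Real.exp_pos y
  field_simp

section Riccati

variable {f : ℝ → ℝ} {κ D : ℝ}

theorem nonneg_of_riccati (hκ : κ ≠ 0) (hf : ∀ x, HasDerivAt f (κ * (D - f x ^ 2)) x) : 0 ≤ D := by
  by_contra! hD
  obtain ⟨b, hb, rfl⟩ : ∃ b, 0 < b ∧ D = -b ^ 2 :=
    ⟨√(-D), Real.sqrt_pos.2 (by linarith), by rw [Real.sq_sqrt (by linarith)]; ring⟩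
  have hderiv : ∀ x, HasDerivAt (fun x ↦ Real.arctan (f x / b) + κ * b * x) 0 x := fun x ↦ by
    refine (((hf x).div_const b).arctan.fun_add
      ((hasDerivAt_id' x).const_mul (κ * b))).congr_deriv ?_
    have : b ^ 2 + f x ^ 2 ≠ 0 := by positivity
    field_simp
    ring
  set C := Real.arctan (f 0 / b)
  set x := (C - Real.pi / 2) / (κ * b)
  have hx : Real.arctan (f x / b) + κ * b * x = C := by
    simpa using eq_of_forall_hasDerivAt_zero hderiv x 0
  have hκbx : κ * b * x = C - Real.pi / 2 := mul_div_cancel₀ _ (by positivity)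
  linarith [Real.arctan_lt_pi_div_two (f x / b)]

theorem ne_zero_of_riccati (hκ : κ ≠ 0) (hf : ∀ x, HasDerivAt f (κ * (D - f x ^ 2)) x)
    (hne : ∀ x, D - f x ^ 2 ≠ 0) : D ≠ 0 := by
  rintro rfl
  have hf₀ : ∀ x, f x ≠ 0 := fun x h ↦ hne x (by simp [h])
  have hderiv : ∀ x, HasDerivAt (fun x ↦ (f x)⁻¹ - κ * x) 0 x := fun x ↦ by
    refine (((hf x).fun_inv (hf₀ x)).fun_sub ((hasDerivAt_id' x).const_mul κ)).congr_deriv ?_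
    have := hf₀ x
    field_simp
    ring
  set x := -(f 0)⁻¹ / κ
  have hx : (f x)⁻¹ - κ * x = (f 0)⁻¹ := by
    simpa using eq_of_forall_hasDerivAt_zero hderiv x 0
  have hκx : κ * x = -(f 0)⁻¹ := mul_div_cancel₀ _ hκ
  exact inv_ne_zero (hf₀ x) (by linarith)

theorem exists_sub_eq_mul_exp_mul_add_of_riccati_sq {A : ℝ}
    (hf : ∀ x, HasDerivAt f (κ * (A ^ 2 - f x ^ 2)) x) (hne : ∀ x, f x + A ≠ 0) :
    ∃ C, ∀ x, A - f x = C * Real.exp (-2 * (κ * A * x)) * (f x + A) := by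
  have hderiv : ∀ x, HasDerivAt
      (fun x ↦ (A - f x) / (f x + A) * Real.exp (2 * (κ * A * x))) 0 x := fun x ↦ by
    refine ((((hf x).const_sub A).fun_div ((hf x).add_const A) (hne x)).fun_mul
      (((hasDerivAt_id' x).const_mul (κ * A)).const_mul 2).exp).congr_deriv ?_
    have := hne x
    field_simp
    ring
  refine ⟨(A - f 0) / (f 0 + A) * Real.exp (2 * (κ * A * 0)), fun x ↦ ?_⟩
  have hexp : Real.exp (2 * (κ * A * x)) * Real.exp (-2 * (κ * A * x)) = 1 := by
    rw [← Real.exp_add, neg_mul, add_neg_cancel, Real.exp_zero]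
  rw [← eq_of_forall_hasDerivAt_zero hderiv x 0, mul_assoc (_ / _), hexp, mul_one,
    div_mul_cancel₀ _ (hne x)]

theorem exists_eq_tanh_of_riccati_sq {A : ℝ} (hκ : κ ≠ 0) (hA : A ≠ 0)
    (hf : ∀ x, HasDerivAt f (κ * (A ^ 2 - f x ^ 2)) x) (hne : ∀ x, A ^ 2 - f x ^ 2 ≠ 0) :
    ∃ a, ∀ x, f x = A * Real.tanh (κ * A * (x - a)) := by
  have hadd : ∀ x, f x + A ≠ 0 := fun x h ↦ hne x (by linear_combination (A - f x) * h)
  have hsub : ∀ x, A - f x ≠ 0 := fun x h ↦ hne x (by linear_combination (A + f x) * h)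
  obtain ⟨C, hC⟩ := exists_sub_eq_mul_exp_mul_add_of_riccati_sq hf hadd
  have hCpos : 0 < C := by
    by_contra! hle
    rcases hle.lt_or_eq with hneg | rfl
    · -- A negative `C` makes `(A - f) / (f + A)` reach `-1`, its value at `f = ∞`.
      set x := Real.log (-C) / (2 * (κ * A)) with hx
      have hexp : C * Real.exp (-2 * (κ * A * x)) = -1 := by
        rw [show -2 * (κ * A * x) = -Real.log (-C) by rw [hx]; field_simp, Real.exp_neg,
          Real.exp_log (neg_pos.2 hneg), inv_neg, mul_neg, mul_inv_cancel₀ hneg.ne]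
      have := hC x
      rw [hexp] at this
      exact hA (by linarith)
    · exact hsub 0 (by simpa using hC 0)
  refine ⟨Real.log C / (2 * (κ * A)), fun x ↦ ?_⟩
  have hexp : Real.exp (-2 * (κ * A * (x - Real.log C / (2 * (κ * A))))) =
      C * Real.exp (-2 * (κ * A * x)) := by
    nth_rw 2 [← Real.exp_log hCpos]
    rw [← Real.exp_add]
    congr 1
    field_simp
    ring
  rw [tanh_eq_one_sub_exp_div_one_add_exp, hexp, mul_div_assoc', eq_div_iff (by positivity)]
  linear_combination -hC x

theorem pos_and_exists_eq_tanh_of_riccati (hκ : κ ≠ 0)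
    (hf : ∀ x, HasDerivAt f (κ * (D - f x ^ 2)) x) (hne : ∀ x, D - f x ^ 2 ≠ 0) :
    0 < D ∧ ∃ a, ∀ x, f x = √D * Real.tanh (κ * √D * (x - a)) := by
  have hD : 0 < D := (nonneg_of_riccati hκ hf).lt_of_ne' (ne_zero_of_riccati hκ hf hne)
  refine ⟨hD, exists_eq_tanh_of_riccati_sq hκ (Real.sqrt_pos.2 hD).ne' ?_ ?_⟩ <;>
    simpa only [Real.sq_sqrt hD.le]

end Riccati

/-- The quantity `η = 1 - |u|²`, the deviation of the mass density of `u` from its value at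
infinity. -/
noncomputable def densityDefect (u : ℝ → ℂ) (x : ℝ) : ℝ := 1 - ‖u x‖ ^ 2

/-- The Gross-Pitaevskii travelling-wave equation `i c u' + u'' + (1 - |u|²) u = 0`, written as a
first-order system for `u` and `v = u'`. -/
structure IsTravelingWave (c : ℝ) (u v : ℝ → ℂ) : Prop where
  hasDerivAt : ∀ x, HasDerivAt u (v x) x
  hasDerivAt_velocity :
    ∀ x, HasDerivAt v (-(Complex.I * c * v x + densityDefect u x * u x)) x

/-- The dark soliton `u_c` of speed `c`. For `c ^ 2 > 2` the square roots take the value `0` and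
this is not a soliton. -/
noncomputable def darkSoliton (c x : ℝ) : ℂ :=
  (√((2 - c ^ 2) / 2) * Real.tanh (√(2 - c ^ 2) * x / 2) : ℝ) - Complex.I * (c / √2 : ℝ)

theorem norm_sq_eq_one_sub_densityDefect (u : ℝ → ℂ) (x : ℝ) :
    ‖u x‖ ^ 2 = 1 - densityDefect u x := by
  simp [densityDefect]

theorem hasDerivAt_densityDefect {u : ℝ → ℂ} {u' : ℂ} {x : ℝ} (hu : HasDerivAt u u' x) :
    HasDerivAt (densityDefect u) (-2 * (conj (u x) * u').re) x := by
  refine (hu.norm_sq.const_sub 1).congr_deriv ?_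
  rw [Complex.inner, mul_comm u']
  ring

theorem im_conj_mul_eq_neg_div_sqrt_two {c η : ℝ} {w z : ℂ} (hη : η ≠ 0)
    (h : (conj z * ((η / √2 : ℝ) * w)).im = c * η / 2) : (conj w * z).im = -(c / √2) := by
  have hsqrt : √2 ^ 2 = 2 := Real.sq_sqrt zero_le_two
  have hconj : (conj w * z).im = -(conj z * w).im := by
    rw [← Complex.conj_im, map_mul, Complex.conj_conj, mul_comm]
  rw [mul_left_comm, Complex.im_ofReal_mul] at h
  rw [hconj, neg_inj]
  field_simp at h ⊢
  linear_combination √2 * h / 2 + c * hsqrt / 2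

namespace IsTravelingWave

variable {c : ℝ} {u v : ℝ → ℂ}

theorem hasDerivAt_energy (h : IsTravelingWave c u v) (x : ℝ) :
    HasDerivAt (fun x ↦ ‖v x‖ ^ 2 - densityDefect u x ^ 2 / 2) 0 x := by
  refine ((h.hasDerivAt_velocity x).norm_sq.fun_sub
    (((hasDerivAt_densityDefect (h.hasDerivAt x)).fun_pow 2).div_const 2)).congr_deriv ?_
  have hpower : inner ℝ (v x) (-(Complex.I * c * v x + densityDefect u x * u x)) =
      -(densityDefect u x * (conj (u x) * v x).re) := by
    simp only [Complex.inner, Complex.mul_re, Complex.mul_im, Complex.add_re, Complex.add_im,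
      Complex.neg_re, Complex.neg_im, Complex.conj_re, Complex.conj_im, Complex.ofReal_re,
      Complex.ofReal_im, Complex.I_re, Complex.I_im]
    ring
  rw [hpower]
  push_cast
  ring

theorem hasDerivAt_momentum (h : IsTravelingWave c u v) (x : ℝ) :
    HasDerivAt (fun x ↦ (conj (u x) * v x).im - c * densityDefect u x / 2) 0 x := by
  have hmul := (h.hasDerivAt x).star.fun_mul (h.hasDerivAt_velocity x)
  refine ((Complex.imCLM.hasFDerivAt.comp_hasDerivAt x hmul).fun_sub
    (((hasDerivAt_densityDefect (h.hasDerivAt x)).const_mul c).div_const 2)).congr_deriv ?_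
  have htorque : (conj (v x) * v x +
      conj (u x) * -(Complex.I * c * v x + densityDefect u x * u x)).im =
      -(c * (conj (u x) * v x).re) := by
    simp only [Complex.mul_re, Complex.mul_im, Complex.add_re, Complex.add_im, Complex.neg_re,
      Complex.neg_im, Complex.conj_re, Complex.conj_im, Complex.ofReal_re, Complex.ofReal_im,
      Complex.I_re, Complex.I_im]
    ring
  rw [Complex.imCLM_apply, ← starRingEnd_apply, ← starRingEnd_apply, htorque]
  ring

section Vacuum

-- Finite energy enters only through a filter `l` along which `v` and `η` tend to `0`.
variable {l : Filter ℝ} [l.NeBot]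

theorem norm_velocity_sq (h : IsTravelingWave c u v) (hv : Tendsto v l (𝓝 0))
    (hη : Tendsto (densityDefect u) l (𝓝 0)) (x : ℝ) : ‖v x‖ ^ 2 = densityDefect u x ^ 2 / 2 := by
  have hlim : Tendsto (fun y ↦ ‖v y‖ ^ 2 - densityDefect u y ^ 2 / 2) l (𝓝 0) := by
    simpa using (hv.norm.pow 2).sub ((hη.pow 2).div_const 2)
  exact sub_eq_zero.1 <| tendsto_nhds_unique
    (tendsto_const_nhds.congr (eq_of_forall_hasDerivAt_zero h.hasDerivAt_energy x)) hlim

theorem im_conj_mul_velocity (h : IsTravelingWave c u v) (hv : Tendsto v l (𝓝 0))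
    (hη : Tendsto (densityDefect u) l (𝓝 0)) (x : ℝ) :
    (conj (u x) * v x).im = c * densityDefect u x / 2 := by
  have hu : Tendsto (fun y ↦ ‖u y‖ ^ 2) l (𝓝 1) := by
    simpa [norm_sq_eq_one_sub_densityDefect] using hη.const_sub 1
  have hlim : Tendsto (fun y ↦ (conj (u y) * v y).im) l (𝓝 0) := by
    refine squeeze_zero_norm (a := fun y ↦ √(‖u y‖ ^ 2) * ‖v y‖) (fun y ↦ ?_) ?_
    · simpa using Complex.abs_im_le_norm (conj (u y) * v y)
    · simpa using hu.sqrt.mul hv.norm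
  have hlim' : Tendsto (fun y ↦ (conj (u y) * v y).im - c * densityDefect u y / 2) l (𝓝 0) := by
    simpa using hlim.sub ((hη.const_mul c).div_const 2)
  exact sub_eq_zero.1 <| tendsto_nhds_unique
    (tendsto_const_nhds.congr (eq_of_forall_hasDerivAt_zero h.hasDerivAt_momentum x)) hlim'

end Vacuum

theorem densityDefect_ne_zero (h : IsTravelingWave c u v)
    (henergy : ∀ x, ‖v x‖ ^ 2 = densityDefect u x ^ 2 / 2) (hu : ∃ x y, u x ≠ u y) (x₀ : ℝ) :
    densityDefect u x₀ ≠ 0 := by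
  intro h₀
  have hnorm : ∀ x, ‖v x‖ ≤ |densityDefect u x| := fun x ↦
    abs_le_of_sq_le_sq' (by nlinarith [henergy x, sq_abs (densityDefect u x)]) (abs_nonneg _) |>.2
  have hη := eq_zero_of_norm_deriv_le_mul (k := fun x ↦ 2 * ‖u x‖)
    (fun x ↦ hasDerivAt_densityDefect (h.hasDerivAt x))
    (continuous_iff_continuousAt.2 fun x ↦ (h.hasDerivAt x).continuousAt.norm.const_mul 2)
    (fun x ↦ calc
      ‖-2 * (conj (u x) * v x).re‖ ≤ 2 * (‖u x‖ * ‖v x‖) := by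
        simpa using Complex.abs_re_le_norm (conj (u x) * v x)
      _ ≤ 2 * ‖u x‖ * ‖densityDefect u x‖ := by
        rw [mul_assoc]; gcongr; exact hnorm x) h₀
  have hv : ∀ x, v x = 0 := fun x ↦ by simpa [hη x] using henergy x
  obtain ⟨x, y, hxy⟩ := hu
  exact hxy (eq_of_forall_hasDerivAt_zero (fun z ↦ hv z ▸ h.hasDerivAt z) x y)

theorem hasDerivAt_velocity_div_densityDefect (h : IsTravelingWave c u v) {x : ℝ}
    (henergy : ‖v x‖ ^ 2 = densityDefect u x ^ 2 / 2)
    (hmomentum : (conj (u x) * v x).im = c * densityDefect u x / 2)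
    (hη : densityDefect u x ≠ 0) : HasDerivAt (fun x ↦ v x / densityDefect u x) 0 x := by
  refine ((h.hasDerivAt_velocity x).fun_div (hasDerivAt_densityDefect (h.hasDerivAt x)).ofReal_comp
    (Complex.ofReal_ne_zero.2 hη)).congr_deriv (div_eq_zero_iff.2 (.inl ?_))
  have hvv : v x * conj (v x) = (densityDefect u x : ℂ) ^ 2 / 2 := by
    rw [Complex.mul_conj']; exact_mod_cast henergy
  have hre := Complex.add_conj (conj (u x) * v x)
  have him := Complex.sub_conj (conj (u x) * v x)
  rw [hmomentum] at him
  simp only [map_mul, Complex.conj_conj] at hre him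
  push_cast at hre him ⊢
  linear_combination 2 * u x * hvv - v x * hre + v x * him

theorem exists_velocity_eq_densityDefect_mul (h : IsTravelingWave c u v)
    (henergy : ∀ x, ‖v x‖ ^ 2 = densityDefect u x ^ 2 / 2)
    (hmomentum : ∀ x, (conj (u x) * v x).im = c * densityDefect u x / 2)
    (hη : ∀ x, densityDefect u x ≠ 0) :
    ∃ w : ℂ, ‖w‖ = 1 ∧ ∀ x, v x = (densityDefect u x / √2 : ℝ) * w := by
  have hquot := eq_of_forall_hasDerivAt_zero fun x ↦
    h.hasDerivAt_velocity_div_densityDefect (henergy x) (hmomentum x) (hη x)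
  refine ⟨√2 * (v 0 / densityDefect u 0), ?_, fun x ↦ ?_⟩
  · have hη₀ := hη 0
    rw [← pow_eq_one_iff_of_nonneg (norm_nonneg _) two_ne_zero, norm_mul, norm_div, mul_pow,
      div_pow, henergy, Complex.norm_real, Complex.norm_real, Real.norm_eq_abs, Real.norm_eq_abs,
      sq_abs, sq_abs, Real.sq_sqrt zero_le_two]
    field_simp
  · have hηx : (densityDefect u x : ℂ) ≠ 0 := Complex.ofReal_ne_zero.2 (hη x)
    have hsqrt : (√2 : ℂ) ≠ 0 := by simp
    rw [← hquot x 0]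
    push_cast
    field_simp

theorem exists_line_parametrization (h : IsTravelingWave c u v) {w : ℂ} (hw : ‖w‖ = 1)
    (hline : ∀ x, (conj w * u x).im = -(c / √2))
    (hv : ∀ x, v x = (densityDefect u x / √2 : ℝ) * w) :
    ∃ f : ℝ → ℝ, (∀ x, u x = w * (f x - Complex.I * (c / √2 : ℝ))) ∧
      (∀ x, densityDefect u x = (2 - c ^ 2) / 2 - f x ^ 2) ∧
      ∀ x, HasDerivAt f (densityDefect u x / √2) x := by
  have hww : conj w * w = 1 := by rw [Complex.conj_mul', hw]; simp
  have hu : ∀ x, u x = w * ((conj w * u x).re - Complex.I * (c / √2 : ℝ)) := fun x ↦ by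
    have hdecomp := Complex.re_add_im (conj w * u x)
    rw [hline] at hdecomp
    push_cast at hdecomp ⊢
    linear_combination -u x * hww - w * hdecomp
  refine ⟨fun x ↦ (conj w * u x).re, hu, fun x ↦ ?_, fun x ↦ ?_⟩
  · have hnorm : ‖u x‖ = ‖conj w * u x‖ := by simp [hw]
    rw [densityDefect, hnorm, Complex.sq_norm, Complex.normSq_apply, hline, neg_mul_neg, ← sq,
      ← sq, div_pow, Real.sq_sqrt zero_le_two]
    ring
  · refine (Complex.reCLM.hasFDerivAt.comp_hasDerivAt x
      ((h.hasDerivAt x).const_mul (conj w))).congr_deriv ?_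
    rw [hv, mul_left_comm, hww, mul_one]
    exact Complex.ofReal_re _

theorem sq_speed_lt_two_and_exists_eq_darkSoliton (h : IsTravelingWave c u v)
    {l : Filter ℝ} [l.NeBot] (hv : Tendsto v l (𝓝 0))
    (hη : Tendsto (densityDefect u) l (𝓝 0)) (hu : ∃ x y, u x ≠ u y) :
    c ^ 2 < 2 ∧ ∃ α a : ℝ, ∀ x, u x = Complex.exp (Complex.I * α) * darkSoliton c (x - a) := by
  have henergy := h.norm_velocity_sq hv hη
  have hmomentum := h.im_conj_mul_velocity hv hη
  have hne := h.densityDefect_ne_zero henergy hu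
  obtain ⟨w, hw, hvw⟩ := h.exists_velocity_eq_densityDefect_mul henergy hmomentum hne
  obtain ⟨f, huf, hηf, hf⟩ := h.exists_line_parametrization hw
    (fun x ↦ im_conj_mul_eq_neg_div_sqrt_two (hne x) (hvw x ▸ hmomentum x)) hvw
  have hriccati : ∀ x, HasDerivAt f ((√2)⁻¹ * ((2 - c ^ 2) / 2 - f x ^ 2)) x := fun x ↦
    (hf x).congr_deriv (by rw [hηf]; ring)
  have hroots : ∀ x, (2 - c ^ 2) / 2 - f x ^ 2 ≠ 0 := fun x ↦ hηf x ▸ hne x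
  obtain ⟨hpos, a, hfa⟩ := pos_and_exists_eq_tanh_of_riccati (by positivity) hriccati hroots
  obtain ⟨α, rfl⟩ := (Complex.norm_eq_one_iff w).1 hw
  refine ⟨by linarith, α, a, fun x ↦ ?_⟩
  have hrate : (√2)⁻¹ * √((2 - c ^ 2) / 2) = √(2 - c ^ 2) / 2 := by
    rw [Real.sqrt_div' _ zero_le_two]
    field_simp
    rw [Real.sq_sqrt zero_le_two]
  rw [huf, hfa, hrate, darkSoliton, mul_comm (α : ℂ), div_mul_eq_mul_div]

end IsTravelingWave

theorem subsonic_solutions_unique_general (c : ℝ) (u : ℝ → ℂ) (hu : Differentiable ℝ u)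
    (hu' : Differentiable ℝ (deriv u)) (hu_nonconst : ∃ x y, u x ≠ u y)
    (hu_deriv : MemLp (deriv u) 2 (volume : Measure ℝ))
    (hu_mod : MemLp (fun x : ℝ ↦ 1 - ‖u x‖ ^ 2) 2 (volume : Measure ℝ))
    (heq : ∀ x : ℝ, Complex.I * (c : ℂ) * deriv u x + deriv (deriv u) x +
      ((1 - ‖u x‖ ^ 2 : ℝ) : ℂ) * u x = 0) :
    c ^ 2 < 2 ∧ ∃ α a : ℝ, ∀ x, u x = Complex.exp (Complex.I * α) * darkSoliton c (x - a) := by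
  have hwave : IsTravelingWave c u (deriv u) :=
    { hasDerivAt := fun x ↦ (hu x).hasDerivAt
      hasDerivAt_velocity := fun x ↦ (hu' x).hasDerivAt.congr_deriv <| by
        rw [densityDefect]; linear_combination heq x }
  have hneBot := comap_nhds_zero_neBot_of_memLp (memLp_prodMk hu_deriv hu_mod) (by simp) (by simp)
    Real.volume_univ
  have hvacuum := tendsto_comap (f := fun x ↦ (deriv u x, 1 - ‖u x‖ ^ 2)) (x := 𝓝 0)
  exact hwave.sq_speed_lt_two_and_exists_eq_darkSoliton hvacuum.fst_nhds hvacuum.snd_nhds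
    hu_nonconst

/-- Uniqueness of subsonic dark solitons for the local Gross--Pitaevskii equation:
every nonconstant bounded smooth finite-energy solution with speed `c ∈ [0, √2)` equals
`e^{iα} u_c(· - a)` for some `α, a ∈ ℝ`, where
`u_c(x) = √((2-c²)/2) tanh(√(2-c²) x/2) - i c/√2`. -/
theorem subsonic_solutions_unique
    (c : ℝ) (hc : c ∈ Set.Ico 0 (Real.sqrt 2))
    (u : ℝ → ℂ) (hu_smooth : ContDiff ℝ (⊤ : ℕ∞) u)
    (hu_bdd : ∃ M : ℝ, ∀ x, ‖u x‖ ≤ M)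
    (hu_nonconst : ∃ x y, u x ≠ u y)
    (hu_deriv : MemLp (deriv u) 2 (volume : Measure ℝ))
    (hu_mod : MemLp (fun x : ℝ => 1 - ‖u x‖ ^ 2) 2 (volume : Measure ℝ))
    (heq : ∀ x : ℝ, Complex.I * (c : ℂ) * deriv u x + deriv (deriv u) x +
        ((1 - ‖u x‖ ^ 2 : ℝ) : ℂ) * u x = 0) :
    ∃ α a : ℝ, ∀ x : ℝ,
      u x = Complex.exp (Complex.I * (α : ℂ)) *
        (((Real.sqrt ((2 - c ^ 2) / 2) * Real.tanh (Real.sqrt (2 - c ^ 2) * (x - a) / 2) : ℝ) : ℂ)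
          - Complex.I * ((c / Real.sqrt 2 : ℝ) : ℂ)) := by
  have hu' : ContDiff ℝ (⊤ : ℕ∞) (deriv u) := (contDiff_infty_iff_deriv.1 hu_smooth).2
  exact (subsonic_solutions_unique_general c u (hu_smooth.differentiable (by simp))
    (hu'.differentiable (by simp)) hu_nonconst hu_deriv hu_mod heq).2
end

section
/- Let W ∈ L¹(ℝ, ℝ) be even, let c > 0, and let η : ℝ → ℝ be a smooth function with η(x) < 1 for all x ∈ ℝ, η ∈ L²(ℝ), η' ∈ L²(ℝ), satisfying η'' − 2(W ⋆ η) + c² η + c² η²/(2(1 − η)) + (η')²/(2(1 − η)) + 2(W ⋆ η)·η = 0 on ℝ. Define θ(x) = (c/2)·∫₀ˣ η(s)/(1 − η(s)) ds and u(x) = √(1 − η(x))·e^{i θ(x)}. Then u satisfies i·c·u'(x) + u''(x) + (W ⋆ (1 − |u|²))(x)·u(x) = 0 for all x ∈ ℝ. -/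
open MeasureTheory

/-!
Write `q = 1 - η`. Since `θ' = cη / (2q)`, the wave `u = √q e^{iθ}` has logarithmic derivative
`g = (-η' + icη) / (2q)`, so `icu' + u'' + wu = (icg + g' + g² + w) u` for every real potential `w`.
The choice of `θ'` is exactly what makes the imaginary part of the bracket vanish, and its real part
is `-J / (2q)`, where `J` is the left-hand side of the hydrodynamic equation. The potential
`W ⋆ (1 - |u|²)` is `W ⋆ η` because `|u|² = q`.
-/

/-- The complex field of density `1 - η` and phase `θ`, given by the Madelung transform. -/
noncomputable def madelungWave (η θ : ℝ → ℝ) (x : ℝ) : ℂ :=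
  (Real.sqrt (1 - η x) : ℂ) * Complex.exp (Complex.I * (θ x : ℂ))

/-- The quantity `J_c(η)(x)` whose vanishing is the hydrodynamic equation. The number `w` stands for
the value `(W ⋆ η)(x)` of the nonlocal potential. -/
noncomputable def hydrodynamicResidual (c w : ℝ) (η : ℝ → ℝ) (x : ℝ) : ℝ :=
  deriv (deriv η) x - 2 * w + c ^ 2 * η x
    + c ^ 2 * η x ^ 2 / (2 * (1 - η x))
    + (deriv η x) ^ 2 / (2 * (1 - η x))
    + 2 * w * η x

/-- The logarithmic derivative `u' / u` of the field `u` of density `1 - η` whose phase has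
derivative `cη / (2(1 - η))`. -/
noncomputable def waveLogDeriv (c : ℝ) (η : ℝ → ℝ) (x : ℝ) : ℂ :=
  (-(↑(deriv η x) : ℂ) + Complex.I * (c * η x)) / (2 * (1 - η x))

theorem hasDerivAt_deriv_of_hasDerivAt_mul {𝕜 𝔸 : Type*} [NontriviallyNormedField 𝕜]
    [NormedCommRing 𝔸] [NormedAlgebra 𝕜 𝔸] {u g : 𝕜 → 𝔸} {g' : 𝔸} {x : 𝕜}
    (hu : ∀ y, HasDerivAt u (g y * u y) y) (hg : HasDerivAt g g' x) :
    HasDerivAt (deriv u) ((g' + g x ^ 2) * u x) x := by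
  rw [show deriv u = fun y => g y * u y from funext fun y => (hu y).deriv]
  exact (hg.fun_mul (hu x)).congr_deriv (by ring)

section Pointwise

variable {η θ : ℝ → ℝ} {c x : ℝ}

theorem one_sub_norm_madelungWave_sq (hη : η x ≤ 1) : 1 - ‖madelungWave η θ x‖ ^ 2 = η x := by
  rw [madelungWave, norm_mul, mul_comm Complex.I, Complex.norm_exp_ofReal_mul_I, mul_one,
    Complex.norm_real, Real.norm_eq_abs, sq_abs, Real.sq_sqrt (sub_nonneg.2 hη), sub_sub_cancel]

theorem hasDerivAt_madelungWave {η' θ' : ℝ} (hη : HasDerivAt η η' x) (hη_lt : η x < 1)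
    (hθ : HasDerivAt θ θ' x) :
    HasDerivAt (madelungWave η θ)
      ((-η' / (2 * (1 - η x)) + Complex.I * θ') * madelungWave η θ x) x := by
  have hq : 0 < 1 - η x := sub_pos.2 hη_lt
  have hsqrt := ((hη.const_sub 1).sqrt hq.ne').ofReal_comp
  have hexp := (hθ.ofReal_comp.const_mul Complex.I).cexp
  have sqrt_deriv_eq : -η' / (2 * Real.sqrt (1 - η x))
      = -η' / (2 * (1 - η x)) * Real.sqrt (1 - η x) := by
    rw [← div_div, ← div_div, div_mul_eq_mul_div, mul_div_assoc, Real.sqrt_div_self, div_eq_mul_inv]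
  refine (hsqrt.fun_mul hexp).congr_deriv ?_
  rw [sqrt_deriv_eq, madelungWave]
  push_cast
  ring

theorem hasDerivAt_madelungWave_waveLogDeriv (hη : DifferentiableAt ℝ η x) (hη_lt : η x < 1)
    (hθ : HasDerivAt θ (c / 2 * (η x / (1 - η x))) x) :
    HasDerivAt (madelungWave η θ) (waveLogDeriv c η x * madelungWave η θ x) x := by
  have hq : (1 - η x : ℂ) ≠ 0 := sub_ne_zero.2 (mod_cast hη_lt.ne')
  convert hasDerivAt_madelungWave hη.hasDerivAt hη_lt hθ using 2
  rw [waveLogDeriv]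
  push_cast
  field_simp

theorem hasDerivAt_waveLogDeriv (hη : DifferentiableAt ℝ η x)
    (hη' : DifferentiableAt ℝ (deriv η) x) (hη_ne : η x ≠ 1) :
    HasDerivAt (waveLogDeriv c η)
      ((-(↑(deriv (deriv η) x) : ℂ) + Complex.I * (c * ↑(deriv η x))) / (2 * (1 - η x))
        + waveLogDeriv c η x * ↑(deriv η x) / (1 - η x)) x := by
  have hq : (1 - η x : ℂ) ≠ 0 := sub_ne_zero.2 (mod_cast hη_ne.symm)
  have hnum := hη'.hasDerivAt.ofReal_comp.fun_neg.fun_add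
    ((hη.hasDerivAt.ofReal_comp.const_mul (c : ℂ)).const_mul Complex.I)
  have hden := (hη.hasDerivAt.ofReal_comp.const_sub 1).const_mul (2 : ℂ)
  refine (hnum.fun_div hden (mul_ne_zero two_ne_zero hq)).congr_deriv ?_
  rw [waveLogDeriv]
  field_simp
  ring

theorem riccati_waveLogDeriv (hη : DifferentiableAt ℝ η x)
    (hη' : DifferentiableAt ℝ (deriv η) x) (hη_ne : η x ≠ 1) (w : ℝ) :
    Complex.I * c * waveLogDeriv c η x + deriv (waveLogDeriv c η) x + waveLogDeriv c η x ^ 2 + w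
      = -(hydrodynamicResidual c w η x : ℂ) / (2 * (1 - η x)) := by
  have hq : (1 - η x : ℂ) ≠ 0 := sub_ne_zero.2 (mod_cast hη_ne.symm)
  rw [(hasDerivAt_waveLogDeriv hη hη' hη_ne).deriv]
  simp only [waveLogDeriv, hydrodynamicResidual]
  push_cast
  field_simp
  linear_combination (c ^ 2 * η x * (2 - η x) : ℂ) * Complex.I_sq

end Pointwise

section Wave

variable {η θ : ℝ → ℝ} {c : ℝ}

theorem hasDerivAt_phase (hη : Continuous η) (hη_ne : ∀ x, η x ≠ 1) (a x : ℝ) :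
    HasDerivAt (fun y => c / 2 * ∫ s in a..y, η s / (1 - η s)) (c / 2 * (η x / (1 - η x))) x := by
  have hcont : Continuous fun s => η s / (1 - η s) :=
    hη.div (continuous_const.sub hη) fun s => sub_ne_zero.2 (hη_ne s).symm
  exact (hcont.integral_hasStrictDerivAt a x).hasDerivAt.const_mul _

theorem travelingWave_madelungWave_eq (hη : Differentiable ℝ η) (hη_lt : ∀ x, η x < 1)
    (hθ : ∀ x, HasDerivAt θ (c / 2 * (η x / (1 - η x))) x) {x : ℝ}
    (hη' : DifferentiableAt ℝ (deriv η) x) (w : ℝ) :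
    Complex.I * c * deriv (madelungWave η θ) x + deriv (deriv (madelungWave η θ)) x
        + w * madelungWave η θ x
      = -(hydrodynamicResidual c w η x : ℂ) / (2 * (1 - η x)) * madelungWave η θ x := by
  have hu (y : ℝ) := hasDerivAt_madelungWave_waveLogDeriv (hη y) (hη_lt y) (hθ y)
  have hg : HasDerivAt (waveLogDeriv c η) (deriv (waveLogDeriv c η) x) x :=
    (hasDerivAt_waveLogDeriv (hη x) hη' (hη_lt x).ne).differentiableAt.hasDerivAt
  rw [(hu x).deriv, (hasDerivAt_deriv_of_hasDerivAt_mul hu hg).deriv,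
    ← riccati_waveLogDeriv (hη x) hη' (hη_lt x).ne w]
  ring

end Wave

/-- The operator `V` replaces `f ↦ W ⋆ f`; taking `V = id` gives the local Gross–Pitaevskii
equation. The phase `θ` is determined up to an additive constant. -/
theorem hydrodynamic_to_travelingWave_general (V : (ℝ → ℝ) → ℝ → ℝ) {c : ℝ} {η θ : ℝ → ℝ}
    (hη : Differentiable ℝ η) (hη_lt : ∀ x, η x < 1)
    (hθ : ∀ x, HasDerivAt θ (c / 2 * (η x / (1 - η x))) x) {x : ℝ}
    (hη' : DifferentiableAt ℝ (deriv η) x) (heq : hydrodynamicResidual c (V η x) η x = 0) :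
    Complex.I * c * deriv (madelungWave η θ) x + deriv (deriv (madelungWave η θ)) x
      + V (fun y => 1 - ‖madelungWave η θ y‖ ^ 2) x * madelungWave η θ x = 0 := by
  have density_eq : (fun y => 1 - ‖madelungWave η θ y‖ ^ 2) = η :=
    funext fun y => one_sub_norm_madelungWave_sq (hη_lt y).le
  rw [density_eq, travelingWave_madelungWave_eq hη hη_lt hθ hη', heq, Complex.ofReal_zero, neg_zero,
    zero_div, zero_mul]

/-- From the hydrodynamic equation back to the traveling-wave equation: if `η < 1` solves
`η'' - 2(W⋆η) + c²η + c²η²/(2(1-η)) + (η')²/(2(1-η)) + 2(W⋆η)η = 0` and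
`θ(x) = (c/2)∫₀ˣ η/(1-η)`, then `u = √(1-η) e^{iθ}` solves
`i c u' + u'' + (W ⋆ (1-|u|²)) u = 0`. -/
theorem hydrodynamic_to_travelingWave
    (W : ℝ → ℝ) (hW_int : Integrable W) (hW_even : ∀ x, W (-x) = W x)
    (c : ℝ) (hc : 0 < c)
    (η : ℝ → ℝ) (hη_smooth : ContDiff ℝ (⊤ : ℕ∞) η) (hη_lt : ∀ x, η x < 1)
    (hη_L2 : MemLp η 2 (volume : Measure ℝ))
    (hη'_L2 : MemLp (deriv η) 2 (volume : Measure ℝ))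
    (heq : ∀ x : ℝ,
      deriv (deriv η) x - 2 * (∫ t : ℝ, W t * η (x - t)) + c ^ 2 * η x
        + c ^ 2 * η x ^ 2 / (2 * (1 - η x))
        + (deriv η x) ^ 2 / (2 * (1 - η x))
        + 2 * (∫ t : ℝ, W t * η (x - t)) * η x = 0)
    (θ : ℝ → ℝ) (hθ : ∀ x : ℝ, θ x = c / 2 * ∫ s in (0 : ℝ)..x, η s / (1 - η s))
    (u : ℝ → ℂ)
    (hu : ∀ x : ℝ, u x = ((Real.sqrt (1 - η x) : ℝ) : ℂ) * Complex.exp (Complex.I * (θ x : ℂ))) :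
    ∀ x : ℝ, Complex.I * (c : ℂ) * deriv u x + deriv (deriv u) x +
      (((∫ t : ℝ, W t * (1 - ‖u (x - t)‖ ^ 2)) : ℝ) : ℂ) * u x = 0 := by
  obtain rfl : u = madelungWave η θ := funext hu
  obtain rfl : θ = fun x => c / 2 * ∫ s in (0 : ℝ)..x, η s / (1 - η s) := funext hθ
  intro x
  exact hydrodynamic_to_travelingWave_general (fun f x => ∫ t, W t * f (x - t))
    (hη_smooth.differentiable (by simp)) hη_lt
    (hasDerivAt_phase hη_smooth.continuous (fun y => (hη_lt y).ne) 0)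
    (contDiff_infty.1 hη_smooth 2).differentiable_deriv_two.differentiableAt (heq x)
end
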